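/- Let k, ℓ be positive integers and n = k + ℓ. Let M, B, N and M', B', N' be positive real numbers with MN/B² = M'N'/B'². Let A and A' be the MBN matrices determined by (k, ℓ, M, B, N) and (k, ℓ, M', B', N') respectively, and let X and X' be positive diagonal n×n matrices such that XAX and X'A'X' are doubly stochastic. Then XAX = X'A'X'; that is, the Sinkhorn limit of an MBN matrix depends only on k, ℓ and the ratio MN/B². -/

import Mathlib

/-!
With `c = √(M'/M)` and `e = √(N'/N)`, the ratio hypothesis says exactly that `c * e = B'/B`, so the
two MBN matrices are diagonally congruent: `A' = D A D`, where `D` is `c` on the first `k` indices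
and `e` on the others. Hence `X'` and `X` give the scalings `X' D` and `X` of the same matrix `A`,
and these agree because a symmetric scaling of a positive matrix to row sums `1` is unique
(`scaling_unique`).
-/

open Matrix BigOperators

/-- A real square matrix is doubly stochastic if every entry is nonnegative and
every row sum and every column sum equals 1. -/
def IsDoublyStochastic {n : ℕ} (A : Matrix (Fin n) (Fin n) ℝ) : Prop :=
  (∀ i j, 0 ≤ A i j) ∧ (∀ i, ∑ j, A i j = 1) ∧ (∀ j, ∑ i, A i j = 1)

/-- The MBN matrix determined by k, ℓ, M, B, N. -/
def MBNmatrix (k l : ℕ) (M B N : ℝ) : Matrix (Fin (k + l)) (Fin (k + l)) ℝ :=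
  fun i j =>
    if (i : ℕ) < k ∧ (j : ℕ) < k then M
    else if k ≤ (i : ℕ) ∧ k ≤ (j : ℕ) then N
    else B

/-- Uniqueness of the symmetric Sinkhorn scaling of a positive matrix. The ratio `y j / x j` has a
largest value `R` and a smallest value `m`; the row equations where these are attained give
`R * m ≤ 1 ≤ R * m`, and equality forces the ratio to be constant. -/
lemma scaling_unique {n : ℕ} (A : Fin n → Fin n → ℝ) (hA : ∀ i j, 0 < A i j)
    (x y : Fin n → ℝ) (hx : ∀ i, 0 < x i) (hy : ∀ i, 0 < y i)
    (ex : ∀ i, x i * ∑ j, A i j * x j = 1) (ey : ∀ i, y i * ∑ j, A i j * y j = 1) :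
    x = y := by
  rcases isEmpty_or_nonempty (Fin n) with h | h
  · exact Subsingleton.elim _ _
  obtain ⟨p, hp⟩ := Finite.exists_max (fun j => y j / x j)
  obtain ⟨q, hq⟩ := Finite.exists_min (fun j => y j / x j)
  obtain ⟨R, hR⟩ : ∃ R, R = y p / x p := ⟨_, rfl⟩
  obtain ⟨m, hm⟩ : ∃ m, m = y q / x q := ⟨_, rfl⟩
  have hmpos : 0 < m := hm ▸ div_pos (hy q) (hx q)
  have hyp : y p = R * x p := by rw [hR, div_mul_cancel₀ _ (hx p).ne']
  have hyq : y q = m * x q := by rw [hm, div_mul_cancel₀ _ (hx q).ne']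
  have hle : ∀ j, y j ≤ R * x j := fun j => by
    rw [hR, ← div_le_iff₀ (hx j)]; exact hp j
  have hge : ∀ j, m * x j ≤ y j := fun j => by
    rw [hm, ← le_div_iff₀ (hx j)]; exact hq j
  have defect : ∀ i t, y i * ∑ j, A i j * (y j - t * x j) = 1 - t * (y i * ∑ j, A i j * x j) := by
    intro i t
    rw [← ey i]
    simp only [mul_sub, Finset.sum_sub_distrib, Finset.mul_sum]
    congr 1
    exact Finset.sum_congr rfl fun j _ => by ring
  have nonneg : ∀ j ∈ Finset.univ, 0 ≤ A p j * (y j - m * x j) := fun j _ =>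
    mul_nonneg (hA p j).le (sub_nonneg.2 (hge j))
  have hsum : 0 ≤ ∑ j, A p j * (y j - m * x j) := Finset.sum_nonneg nonneg
  have d1 : y p * ∑ j, A p j * (y j - m * x j) = 1 - m * R := by
    rw [defect p m, hyp, mul_assoc R, ex p, mul_one]
  have d2 : y q * ∑ j, A q j * (y j - R * x j) = 1 - R * m := by
    rw [defect q R, hyq, mul_assoc m, ex q, mul_one]
  have hneg : y q * ∑ j, A q j * (y j - R * x j) ≤ 0 :=
    mul_nonpos_of_nonneg_of_nonpos (hy q).le (Finset.sum_nonpos fun j _ =>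
      mul_nonpos_of_nonneg_of_nonpos (hA q j).le (sub_nonpos.2 (hle j)))
  have hpos := mul_nonneg (hy p).le hsum
  have hRm : m * R = 1 := by linarith
  have hzero : ∑ j, A p j * (y j - m * x j) = 0 := by
    rw [hRm, sub_self] at d1
    exact (mul_eq_zero.1 d1).resolve_left (hy p).ne'
  have hall : ∀ j, y j = m * x j := fun j =>
    sub_eq_zero.1 ((mul_eq_zero.1 ((Finset.sum_eq_zero_iff_of_nonneg nonneg).1 hzero j
      (Finset.mem_univ j))).resolve_left (hA p j).ne')
  have hmR : R = m := mul_right_cancel₀ (hx p).ne' (hyp.symm.trans (hall p))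
  have hm1 : m = 1 := by
    rw [hmR] at hRm
    nlinarith
  funext j
  rw [hall j, hm1, one_mul]

lemma diagonal_mul_mul_diagonal_apply {n : ℕ} (A : Matrix (Fin n) (Fin n) ℝ) (x : Fin n → ℝ)
    (i j : Fin n) : (Matrix.diagonal x * A * Matrix.diagonal x) i j = x i * A i j * x j := by
  rw [Matrix.mul_diagonal, Matrix.diagonal_mul]

lemma MBNmatrix_pos {k l : ℕ} {M B N : ℝ} (hM : 0 < M) (hB : 0 < B) (hN : 0 < N)
    (i j : Fin (k + l)) : 0 < MBNmatrix k l M B N i j := by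
  unfold MBNmatrix
  split_ifs <;> assumption

/-- MBN matrices with the same ratio `M * N / B ^ 2` are congruent by a positive diagonal matrix. -/
lemma exists_MBNmatrix_congr (k l : ℕ) {M B N M' B' N' : ℝ}
    (hM : 0 < M) (hB : 0 < B) (hN : 0 < N) (hM' : 0 < M') (hB' : 0 < B') (hN' : 0 < N')
    (hratio : M * N / B ^ 2 = M' * N' / B' ^ 2) :
    ∃ d : Fin (k + l) → ℝ, (∀ i, 0 < d i) ∧
      ∀ i j, MBNmatrix k l M' B' N' i j = d i * MBNmatrix k l M B N i j * d j := by
  obtain ⟨c, hc⟩ : ∃ c, c = √(M' / M) := ⟨_, rfl⟩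
  obtain ⟨e, he⟩ : ∃ e, e = √(N' / N) := ⟨_, rfl⟩
  have hcpos : 0 < c := hc ▸ Real.sqrt_pos.2 (div_pos hM' hM)
  have hepos : 0 < e := he ▸ Real.sqrt_pos.2 (div_pos hN' hN)
  have hcM : M' = c * M * c := by
    have : c * c = M' / M := hc ▸ Real.mul_self_sqrt (div_pos hM' hM).le
    rw [mul_right_comm, this, div_mul_cancel₀ _ hM.ne']
  have heN : N' = e * N * e := by
    have : e * e = N' / N := he ▸ Real.mul_self_sqrt (div_pos hN' hN).le
    rw [mul_right_comm, this, div_mul_cancel₀ _ hN.ne']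
  have hB2 : B' = c * B * e := by
    rw [div_eq_div_iff (by positivity) (by positivity), hcM, heN] at hratio
    have : B' ^ 2 = (c * B * e) ^ 2 := by
      refine mul_left_cancel₀ (mul_pos hM hN).ne' ?_
      rw [hratio]; ring
    exact (pow_left_inj₀ hB'.le (by positivity) two_ne_zero).1 this
  refine ⟨fun i => if (i : ℕ) < k then c else e, fun i => ?_, fun i j => ?_⟩
  · dsimp only
    split_ifs <;> assumption
  · have hB3 : B' = e * B * c := by rw [hB2]; ring
    by_cases hi : (i : ℕ) < k <;> by_cases hj : (j : ℕ) < k <;>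
      simp only [MBNmatrix, ← not_lt, hi, hj, and_self, and_true, and_false, not_true,
        not_false_eq_true, if_true, if_false] <;> assumption

/-- The Sinkhorn limit of an MBN matrix depends only on k, ℓ and the ratio
MN/B². -/
theorem MBN_sinkhorn_ratio (k l : ℕ) (hk : 0 < k) (hl : 0 < l)
    (M B N M' B' N' : ℝ)
    (hM : 0 < M) (hB : 0 < B) (hN : 0 < N)
    (hM' : 0 < M') (hB' : 0 < B') (hN' : 0 < N')
    (hratio : M * N / B ^ 2 = M' * N' / B' ^ 2)
    (x x' : Fin (k + l) → ℝ) (hx : ∀ i, 0 < x i) (hx' : ∀ i, 0 < x' i)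
    (hDS : IsDoublyStochastic
      (Matrix.diagonal x * MBNmatrix k l M B N * Matrix.diagonal x))
    (hDS' : IsDoublyStochastic
      (Matrix.diagonal x' * MBNmatrix k l M' B' N' * Matrix.diagonal x')) :
    Matrix.diagonal x * MBNmatrix k l M B N * Matrix.diagonal x
      = Matrix.diagonal x' * MBNmatrix k l M' B' N' * Matrix.diagonal x' := by
  obtain ⟨d, hd, hA⟩ := exists_MBNmatrix_congr k l hM hB hN hM' hB' hN' hratio
  have hxd : x = fun i => x' i * d i := by
    refine scaling_unique (MBNmatrix k l M B N) (MBNmatrix_pos hM hB hN) x _ hx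
      (fun i => mul_pos (hx' i) (hd i)) (fun i => ?_) (fun i => ?_)
    · rw [← hDS.2.1 i, Finset.mul_sum]
      refine Finset.sum_congr rfl fun j _ => ?_
      rw [diagonal_mul_mul_diagonal_apply]; ring
    · rw [← hDS'.2.1 i, Finset.mul_sum]
      refine Finset.sum_congr rfl fun j _ => ?_
      rw [diagonal_mul_mul_diagonal_apply, hA]; ring
  ext i j
  rw [diagonal_mul_mul_diagonal_apply, diagonal_mul_mul_diagonal_apply, hA, hxd]
  ring
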